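/- arXiv:math/0612493 — 6 statements merged into one kernel-verified Lean document; each statement's English description precedes it below -/
import Mathlib

section
/- Let k be a field and V a k-vector space. Let r ∈ End(V ⊗ V) be skew, i.e. r = −r^{21}. Then r satisfies the cyclic identity r^{12}r^{23} + r^{23}r^{31} + r^{31}r^{12} = 0 in End(V^{⊗3}) (which is the double Jacobi identity for the associated double bracket) if and only if r satisfies the associative Yang–Baxter equation AYBE(r) := r^{12}r^{13} − r^{23}r^{12} + r^{13}r^{23} = 0. -/
/- STATEMENT 1: For a skew `r ∈ End(V ⊗ V)`, the cyclic (double Jacobi) identity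
`r¹²r²³ + r²³r³¹ + r³¹r¹² = 0` holds iff the associative Yang–Baxter equation
`AYBE(r) = r¹²r¹³ − r²³r¹² + r¹³r²³ = 0` holds. -/

open TensorProduct

noncomputable section

variable (k : Type*) [Field k] (V : Type*) [AddCommGroup V] [Module k V]

/-- The flip of `V ⊗ V`. -/
def flip2 : V ⊗[k] V →ₗ[k] V ⊗[k] V := (TensorProduct.comm k V V).toLinearMap

/-- `r²¹ = τ ∘ r ∘ τ`. -/
def r21 (r : V ⊗[k] V →ₗ[k] V ⊗[k] V) : V ⊗[k] V →ₗ[k] V ⊗[k] V :=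
  flip2 k V ∘ₗ r ∘ₗ flip2 k V

/-- The associator `(V ⊗ V) ⊗ V ≃ V ⊗ (V ⊗ V)`. -/
def assoc3 : (V ⊗[k] V) ⊗[k] V ≃ₗ[k] V ⊗[k] (V ⊗[k] V) := TensorProduct.assoc k V V V

/-- `r¹²`, acting as `r` on the first two tensor factors of `V ⊗ (V ⊗ V)`. -/
def r12 (r : V ⊗[k] V →ₗ[k] V ⊗[k] V) : Module.End k (V ⊗[k] (V ⊗[k] V)) :=
  (assoc3 k V).toLinearMap ∘ₗ (LinearMap.rTensor V r) ∘ₗ (assoc3 k V).symm.toLinearMap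

/-- `r²³`, acting as `r` on the last two tensor factors of `V ⊗ (V ⊗ V)`. -/
def r23 (r : V ⊗[k] V →ₗ[k] V ⊗[k] V) : Module.End k (V ⊗[k] (V ⊗[k] V)) :=
  LinearMap.lTensor V r

/-- The flip of the second and third tensor factors of `V ⊗ (V ⊗ V)`. -/
def P23 : Module.End k (V ⊗[k] (V ⊗[k] V)) := LinearMap.lTensor V (flip2 k V)

/-- `r¹³`: first slot of `r` on factor 1, second slot on factor 3. -/
def r13 (r : V ⊗[k] V →ₗ[k] V ⊗[k] V) : Module.End k (V ⊗[k] (V ⊗[k] V)) :=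
  P23 k V ∘ₗ r12 k V r ∘ₗ P23 k V

/-- `r³¹ = (r²¹)¹³`: first slot of `r` on factor 3, second slot on factor 1. -/
def r31 (r : V ⊗[k] V →ₗ[k] V ⊗[k] V) : Module.End k (V ⊗[k] (V ⊗[k] V)) :=
  r13 k V (r21 k V r)

/-! Conjugation by the flip of the last two factors exchanges `r¹²` with `r¹³`, and `r²³` with
`r³²`. If `r` is skew, then `r³¹ = -r¹³` and `r³² = -r²³`, so this conjugation turns the
cyclic expression `r¹²r²³ - r²³r¹³ - r¹³r¹²` into
`-r¹³r²³ + r²³r¹² - r¹²r¹³ = -AYBE(r)`. -/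

theorem cyclic_eq_zero_iff_aybe_eq_zero {A : Type*} [NonUnitalNonAssocRing A] (σ : A ≃+* A)
    {a b c : A} (hac : σ a = c) (hca : σ c = a) (hb : σ b = -b) :
    a * b + b * -c + -c * a = 0 ↔ a * c - b * a + c * b = 0 := by
  have hσ : σ (a * b + b * -c + -c * a) = -(a * c - b * a + c * b) := by
    simp only [map_add, map_mul, map_neg, hac, hca, hb, mul_neg, neg_mul, neg_neg]
    abel
  rw [← map_eq_zero_iff σ σ.injective, hσ, neg_eq_zero]

section Legs

variable {R M : Type*} [CommSemiring R] [AddCommMonoid M] [Module R M]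

/-- `r ↦ r²¹`, the conjugation of endomorphisms of `M ⊗ M` by the flip. -/
def flipConj : Module.End R (M ⊗[R] M) ≃ₐ[R] Module.End R (M ⊗[R] M) :=
  (TensorProduct.comm R M M).conjAlgEquiv R

/-- Conjugation of endomorphisms of `M ⊗ (M ⊗ M)` by the flip of the last two factors. -/
def swap23 : Module.End R (M ⊗[R] (M ⊗[R] M)) ≃ₐ[R] Module.End R (M ⊗[R] (M ⊗[R] M)) :=
  ((TensorProduct.comm R M M).lTensor M).conjAlgEquiv R

/-- `r ↦ r¹²`, with the triple tensor power bracketed as `M ⊗ (M ⊗ M)`. -/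
def leg12 : Module.End R (M ⊗[R] M) →ₐ[R] Module.End R (M ⊗[R] (M ⊗[R] M)) :=
  ((TensorProduct.assoc R M M M).conjAlgEquiv R).toAlgHom.comp
    (Module.End.rTensorAlgHom R (M ⊗[R] M) M)

/-- `r ↦ r²³`, with the triple tensor power bracketed as `M ⊗ (M ⊗ M)`. -/
def leg23 : Module.End R (M ⊗[R] M) →ₐ[R] Module.End R (M ⊗[R] (M ⊗[R] M)) :=
  Module.End.lTensorAlgHom R (M ⊗[R] M) M

/-- `r ↦ r¹³`, obtained by carrying `r¹²` along the flip of the last two factors. The operator `r³¹`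
is then `leg13 (flipConj r)`. -/
def leg13 : Module.End R (M ⊗[R] M) →ₐ[R] Module.End R (M ⊗[R] (M ⊗[R] M)) :=
  swap23.toAlgHom.comp leg12

theorem swap23_leg12 (r : Module.End R (M ⊗[R] M)) : swap23 (leg12 r) = leg13 r :=
  rfl

theorem swap23_leg13 (r : Module.End R (M ⊗[R] M)) : swap23 (leg13 r) = leg12 r :=
  swap23.symm_apply_apply (leg12 r)

theorem leg23_apply (r : Module.End R (M ⊗[R] M)) : leg23 r = r.lTensor M :=
  rfl

theorem swap23_leg23 (r : Module.End R (M ⊗[R] M)) : swap23 (leg23 r) = leg23 (flipConj r) := by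
  simp only [leg23_apply, swap23, flipConj, LinearEquiv.conjAlgEquiv_apply,
    LinearMap.lTensor_comp, LinearEquiv.symm_lTensor, LinearEquiv.coe_lTensor]

end Legs

theorem stmt_1_general {R M : Type*} [CommRing R] [AddCommGroup M] [Module R M]
    (r : Module.End R (M ⊗[R] M)) (hskew : r = -flipConj r) :
    leg12 r * leg23 r + leg23 r * leg13 (flipConj r) + leg13 (flipConj r) * leg12 r = 0 ↔
      leg12 r * leg13 r - leg23 r * leg12 r + leg13 r * leg23 r = 0 := by
  have hflip : flipConj r = -r := (neg_eq_iff_eq_neg.mpr hskew).symm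
  have hleg23 : swap23 (leg23 r) = -leg23 r := by rw [swap23_leg23, hflip, map_neg]
  rw [hflip, map_neg]
  exact cyclic_eq_zero_iff_aybe_eq_zero swap23.toRingEquiv (swap23_leg12 r) (swap23_leg13 r) hleg23

theorem stmt_1 (r : V ⊗[k] V →ₗ[k] V ⊗[k] V) (hskew : r = - r21 k V r) :
    r12 k V r * r23 k V r + r23 k V r * r31 k V r + r31 k V r * r12 k V r = 0 ↔
      r12 k V r * r13 k V r - r23 k V r * r12 k V r + r13 k V r * r23 k V r = 0 :=
  -- The operators agree definitionally: `(TensorProduct.comm k V V).symm` is `comm` again.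
  stmt_1_general r hskew

end
end

section
/- Let k be a field, V a k-vector space, and r ∈ End(V ⊗ V) skew (r = −r^{21}). Then CYBE(r) = AYBE(r) − P₂₃ ∘ AYBE(r) ∘ P₂₃, where P₂₃ ∈ End(V^{⊗3}) is the operator flipping the second and third tensor factors. Consequently, every skew solution of the associative Yang–Baxter equation (AYBE(r) = 0) is also a solution of the classical Yang–Baxter equation (CYBE(r) = 0). -/
/- STATEMENT 2: For skew `r`, `CYBE(r) = AYBE(r) − P₂₃ ∘ AYBE(r) ∘ P₂₃`; consequently
every skew solution of the AYBE is a solution of the CYBE. -/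

open TensorProduct

noncomputable section

variable (k : Type*) [Field k] (V : Type*) [AddCommGroup V] [Module k V]

/-- `CYBE(r) = [r¹², r¹³] − [r²³, r¹²] + [r¹³, r²³]`. -/
def CYBE (r : V ⊗[k] V →ₗ[k] V ⊗[k] V) : Module.End k (V ⊗[k] (V ⊗[k] V)) :=
  (r12 k V r * r13 k V r - r13 k V r * r12 k V r)
    - (r23 k V r * r12 k V r - r12 k V r * r23 k V r)
    + (r13 k V r * r23 k V r - r23 k V r * r13 k V r)

/-- `AYBE(r) = r¹²r¹³ − r²³r¹² + r¹³r²³`. -/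
def AYBE (r : V ⊗[k] V →ₗ[k] V ⊗[k] V) : Module.End k (V ⊗[k] (V ⊗[k] V)) :=
  r12 k V r * r13 k V r - r23 k V r * r12 k V r + r13 k V r * r23 k V r

/-!
Conjugation by the involution `P₂₃` exchanges `r¹²` and `r¹³` and turns `r²³` into
`r³² = (r²¹)²³`. Applied to `AYBE(r)` it therefore produces the same products in the opposite
order, with `r³²` in place of `r²³`. Subtracting completes each product to a commutator, up to
terms with a factor `r²³ + r³²`, which vanishes for skew `r`.
-/

section

theorem conj_conj_of_mul_self_eq_one {M : Type*} [Monoid M] {p : M} (hp : p * p = 1) (a : M) :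
    p * (p * a * p) * p = a := by
  calc p * (p * a * p) * p = (p * p) * a * (p * p) := by simp only [mul_assoc]
    _ = a := by rw [hp, one_mul, mul_one]

theorem conj_mul_of_mul_self_eq_one {M : Type*} [Monoid M] {p : M} (hp : p * p = 1) (a b : M) :
    p * (a * b) * p = (p * a * p) * (p * b * p) := by
  calc p * (a * b) * p = p * a * (p * p) * b * p := by rw [hp, mul_one, ← mul_assoc p]
    _ = (p * a * p) * (p * b * p) := by simp only [mul_assoc]

theorem flip2_comp_flip2 : flip2 k V ∘ₗ flip2 k V = LinearMap.id :=
  TensorProduct.comm_comp_comm k V V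

theorem P23_mul_P23 : P23 k V * P23 k V = 1 := by
  rw [P23, Module.End.mul_eq_comp, ← LinearMap.lTensor_comp, flip2_comp_flip2,
    LinearMap.lTensor_id, Module.End.one_eq_id]

variable (r : V ⊗[k] V →ₗ[k] V ⊗[k] V)

theorem P23_conj_r12 : P23 k V * r12 k V r * P23 k V = r13 k V r := rfl

theorem P23_conj_r13 : P23 k V * r13 k V r * P23 k V = r12 k V r := by
  rw [← P23_conj_r12, conj_conj_of_mul_self_eq_one (P23_mul_P23 k V)]

theorem P23_conj_r23 : P23 k V * r23 k V r * P23 k V = r23 k V (r21 k V r) := by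
  simp only [P23, r23, r21, Module.End.mul_eq_comp, LinearMap.lTensor_comp, LinearMap.comp_assoc]

theorem P23_conj_AYBE :
    P23 k V * AYBE k V r * P23 k V =
      r13 k V r * r12 k V r - r23 k V (r21 k V r) * r13 k V r
        + r12 k V r * r23 k V (r21 k V r) := by
  simp only [AYBE, mul_add, mul_sub, add_mul, sub_mul,
    conj_mul_of_mul_self_eq_one (P23_mul_P23 k V), P23_conj_r12, P23_conj_r13, P23_conj_r23]

theorem AYBE_sub_P23_conj_AYBE :
    AYBE k V r - P23 k V * AYBE k V r * P23 k V =
      CYBE k V r + r23 k V (r + r21 k V r) * r13 k V r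
        - r12 k V r * r23 k V (r + r21 k V r) := by
  have r23_add : r23 k V (r + r21 k V r) = r23 k V r + r23 k V (r21 k V r) :=
    LinearMap.lTensor_add V r (r21 k V r)
  rw [P23_conj_AYBE, r23_add, AYBE, CYBE]
  noncomm_ring

end

theorem stmt_2 (r : V ⊗[k] V →ₗ[k] V ⊗[k] V) (hskew : r = - r21 k V r) :
    CYBE k V r = AYBE k V r - P23 k V * AYBE k V r * P23 k V ∧
      (AYBE k V r = 0 → CYBE k V r = 0) := by
  have symmetrization_eq_zero : r + r21 k V r = 0 := eq_neg_iff_add_eq_zero.mp hskew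
  have r23_zero : r23 k V 0 = 0 := LinearMap.lTensor_zero V
  have CYBE_eq : CYBE k V r = AYBE k V r - P23 k V * AYBE k V r * P23 k V := by
    rw [AYBE_sub_P23_conj_AYBE, symmetrization_eq_zero, r23_zero, zero_mul, mul_zero, add_zero,
      sub_zero]
  refine ⟨CYBE_eq, fun hAYBE => ?_⟩
  rw [CYBE_eq, hAYBE, mul_zero, zero_mul, sub_zero]

end
end

section
/- Let k be a field and A an associative unital k-algebra which is prime (for all nonzero a, b ∈ A there exists c ∈ A with acb ≠ 0) and noncommutative. If x ∈ A ⊗ A ⊗ A satisfies (a⊗1⊗1)·x = (1⊗1⊗a)·x for all a ∈ A (multiplication in the algebra A^{⊗3}), then x = 0. -/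
/- STATEMENT 6: If `A` is prime and noncommutative and `x ∈ A ⊗ A ⊗ A` satisfies
`(a⊗1⊗1)·x = (1⊗1⊗a)·x` for all `a ∈ A`, then `x = 0`. -/

open TensorProduct

/-!
Left multiplications on the two outer factors commute, so the condition on `x` makes
`{a | (1 ⊗ 1 ⊗ a) * x = 0}` a two-sided ideal containing all commutators: for instance
`(1 ⊗ 1 ⊗ a * b) * x = (b ⊗ 1 ⊗ a) * x = (b ⊗ 1 ⊗ 1) * (a ⊗ 1 ⊗ 1) * x = (1 ⊗ 1 ⊗ b * a) * x`.
Applying functionals to the first two factors turns `x` into elements of `A` annihilated by the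
same ideal. These vanish if `A` is prime and noncommutative, and they determine `x` if the first two
factors are projective.
-/

section Intertwined

variable {A S X : Type*} [Semigroup A] [Semigroup S] [SemigroupAction S X] {L R : A →ₙ* S} {x : X}

theorem map_mul_smul_comm_of_intertwined (hLR : ∀ a b, Commute (L a) (R b))
    (hx : ∀ a, L a • x = R a • x) (a b : A) : R (a * b) • x = R (b * a) • x :=
  calc R (a * b) • x = R a • L b • x := by rw [map_mul, mul_smul, hx]
    _ = L b • L a • x := by rw [← mul_smul, ← (hLR b a).eq, mul_smul, hx]
    _ = R (b * a) • x := by rw [← mul_smul, ← map_mul, hx]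

theorem map_mul_mul_smul_comm_of_intertwined (hLR : ∀ a b, Commute (L a) (R b))
    (hx : ∀ a, L a • x = R a • x) (a b c : A) : R (a * b * c) • x = R (b * a * c) • x := by
  have move_right (d : A) : R (d * c) • x = L c • R d • x := by
    rw [map_mul, mul_smul, ← hx, ← mul_smul, ← (hLR c d).eq, mul_smul]
  rw [move_right, map_mul_smul_comm_of_intertwined hLR hx, ← move_right]

end Intertwined

section LeftSlice

variable {k M : Type*} [CommSemiring k] [AddCommMonoid M] [Module k M]

/-- The slice map `φ ⊗ id : M ⊗ N → k ⊗ N ≃ N` of a functional `φ` on the left factor. Slice maps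
play the role of coordinates of a tensor, without a choice of basis. -/
noncomputable def leftSlice (N : Type*) [AddCommMonoid N] [Module k N] (φ : Module.Dual k M) :
    M ⊗[k] N →ₗ[k] N :=
  TensorProduct.lid k N ∘ₗ φ.rTensor N

theorem eq_zero_of_leftSlice_eq_zero {N : Type*} [AddCommMonoid N] [Module k N]
    [Module.Projective k M] {x : M ⊗[k] N} (hx : ∀ φ : Module.Dual k M, leftSlice N φ x = 0) :
    x = 0 := by
  classical
  obtain ⟨s, hs⟩ := Module.projective_def'.mp ‹Module.Projective k M›
  have image_eq_zero : s.rTensor N x = 0 := by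
    apply (finsuppScalarLeft k N M).injective
    ext i
    rw [finsuppScalarLeft_apply, ← LinearMap.rTensor_comp_apply, map_zero, Finsupp.zero_apply]
    exact hx (Finsupp.lapply i ∘ₗ s)
  rw [← LinearMap.rTensor_id_apply N M x, ← hs, LinearMap.rTensor_comp_apply, image_eq_zero,
    map_zero]

theorem leftSlice_one_tmul_mul {C A : Type*} [Semiring C] [Algebra k C] [Semiring A] [Algebra k A]
    (φ : Module.Dual k C) (a : A) (x : C ⊗[k] A) :
    leftSlice A φ (((1 : C) ⊗ₜ[k] a) * x) = a * leftSlice A φ x := by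
  induction x with
  | zero => simp only [mul_zero, map_zero]
  | tmul c b => simp [leftSlice]
  | add y z hy hz => simp only [mul_add, map_add, hy, hz]

end LeftSlice

section CommutatorAnnihilator

variable {k A : Type*} [CommSemiring k] [Semiring A] [Algebra k A]

/- `hA` says, without subtraction, that the ideal generated by the commutators of `A` has zero right
annihilator. -/
theorem eq_zero_of_map_tmul_one_mul_eq {C : Type*} [Semiring C] [Algebra k C]
    [Module.Projective k C] (f : A →ₙ* C)
    (hA : ∀ y : A, (∀ u v c : A, u * v * c * y = v * u * c * y) → y = 0) {x : C ⊗[k] A}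
    (hx : ∀ a : A, (f a ⊗ₜ[k] (1 : A)) * x = ((1 : C) ⊗ₜ[k] a) * x) : x = 0 := by
  let L : A →ₙ* C ⊗[k] A :=
    ((Algebra.TensorProduct.includeLeft : C →ₐ[k] C ⊗[k] A) : C →ₙ* C ⊗[k] A).comp f
  let R : A →ₙ* C ⊗[k] A := (Algebra.TensorProduct.includeRight : A →ₐ[k] C ⊗[k] A)
  have commute_L_R (a b : A) : Commute (L a) (R b) :=
    (Commute.one_right (f a)).tmul (Commute.one_left b)
  refine eq_zero_of_leftSlice_eq_zero fun φ ↦ hA _ fun u v c ↦ ?_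
  have one_tmul_mul_comm : ((1 : C) ⊗ₜ[k] (u * v * c)) * x = ((1 : C) ⊗ₜ[k] (v * u * c)) * x :=
    map_mul_mul_smul_comm_of_intertwined commute_L_R hx u v c
  rw [← leftSlice_one_tmul_mul, one_tmul_mul_comm, leftSlice_one_tmul_mul]

theorem stmt_6_general {B : Type*} [Semiring B] [Algebra k B] [Module.Projective k A]
    [Module.Projective k B]
    (hA : ∀ y : A, (∀ u v c : A, u * v * c * y = v * u * c * y) → y = 0) (x : A ⊗[k] (B ⊗[k] A))
    (hx : ∀ a : A,
      (a ⊗ₜ[k] ((1 : B) ⊗ₜ[k] (1 : A))) * x = ((1 : A) ⊗ₜ[k] ((1 : B) ⊗ₜ[k] a)) * x) :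
    x = 0 := by
  let e := (Algebra.TensorProduct.assoc k k k A B A).symm
  have e_tmul_one_mul (a : A) :
      ((a ⊗ₜ[k] (1 : B)) ⊗ₜ[k] (1 : A)) * e x = ((1 : A ⊗[k] B) ⊗ₜ[k] a) * e x :=
    calc _ = e ((a ⊗ₜ[k] ((1 : B) ⊗ₜ[k] (1 : A))) * x) := (map_mul e _ x).symm
      _ = e (((1 : A) ⊗ₜ[k] ((1 : B) ⊗ₜ[k] a)) * x) := congrArg e (hx a)
      _ = _ := map_mul e _ x
  have e_eq_zero : e x = 0 :=
    eq_zero_of_map_tmul_one_mul_eq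
      ((Algebra.TensorProduct.includeLeft : A →ₐ[k] A ⊗[k] B) : A →ₙ* A ⊗[k] B) hA e_tmul_one_mul
  exact (map_eq_zero_iff e e.injective).mp e_eq_zero

end CommutatorAnnihilator

theorem eq_zero_of_forall_mul_mul_mul_comm {A : Type*} [Ring A]
    (hprime : ∀ a b : A, a ≠ 0 → b ≠ 0 → ∃ c : A, a * c * b ≠ 0)
    (hnoncomm : ∃ u v : A, u * v ≠ v * u) (y : A)
    (hy : ∀ u v c : A, u * v * c * y = v * u * c * y) : y = 0 := by
  obtain ⟨u, v, huv⟩ := hnoncomm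
  by_contra y_ne_zero
  obtain ⟨c, hc⟩ := hprime (u * v - v * u) y (sub_ne_zero.mpr huv) y_ne_zero
  exact hc (by rw [sub_mul, sub_mul, hy, sub_self])

theorem stmt_6 (k : Type*) [Field k] (A : Type*) [Ring A] [Algebra k A]
    (hprime : ∀ a b : A, a ≠ 0 → b ≠ 0 → ∃ c : A, a * c * b ≠ 0)
    (hnoncomm : ∃ u v : A, u * v ≠ v * u)
    (x : A ⊗[k] (A ⊗[k] A))
    (hx : ∀ a : A,
      (a ⊗ₜ[k] ((1 : A) ⊗ₜ[k] (1 : A))) * x = ((1 : A) ⊗ₜ[k] ((1 : A) ⊗ₜ[k] a)) * x) :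
    x = 0 :=
  stmt_6_general (eq_zero_of_forall_mul_mul_mul_comm hprime hnoncomm) x hx
end

section
/- Let k be a field, A a commutative associative unital k-algebra, and r : A ⊗ A → A ⊗ A a k-linear map which is skew (r(b⊗a) = −τ(r(a⊗b)) for all a,b, where τ is the flip of A ⊗ A) and satisfies the Leibniz rule r(a ⊗ bc) = (b⊗1)·r(a⊗c) + r(a⊗b)·(1⊗c) for all a,b,c ∈ A. Then for all a, b, c ∈ A: (a⊗1 − 1⊗a)·r(b⊗c) = (c⊗1 − 1⊗c)·r(b⊗a) = (b⊗1 − 1⊗b)·r(c⊗a) = (a⊗1 − 1⊗a)·r(c⊗b), where · denotes multiplication in the commutative algebra A ⊗ A. -/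
/- STATEMENT 10: For `A` commutative and `r : A ⊗ A → A ⊗ A` skew and satisfying the Leibniz
rule, for all `a,b,c`:
`(a⊗1 − 1⊗a)·r(b⊗c) = (c⊗1 − 1⊗c)·r(b⊗a) = (b⊗1 − 1⊗b)·r(c⊗a) = (a⊗1 − 1⊗a)·r(c⊗b)`. -/

open TensorProduct

/-! Since `A` is commutative, expanding `r (b ⊗ a * c) = r (b ⊗ c * a)` by the Leibniz rule in both
ways lets `a` and `c` be exchanged in `(a ⊗ 1 - 1 ⊗ a) * r (b ⊗ c)`. Skewness transports the Leibniz
rule to the first argument, where the flip interchanges the two factors; commutativity of `A`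
interchanges them back, so the very same rule, and hence the same exchange, holds there. -/

theorem sub_mul_eq_sub_mul_of_leibniz {A B : Type*} [CommMagma A] [CommRing B] {σ τ D : A → B}
    (leibniz : ∀ a b, D (a * b) = σ a * D b + D a * τ b) (a b : A) :
    (σ a - τ a) * D b = (σ b - τ b) * D a := by
  have expansions_eq : σ a * D b + D a * τ b = σ b * D a + D b * τ a := by
    rw [← leibniz, ← leibniz, mul_comm]
  linear_combination expansions_eq

section SkewBracket

variable {k A : Type*} [CommSemiring k] [CommRing A] [Algebra k A] {r : A → A → A ⊗[k] A}

theorem leibniz_left_of_skew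
    (skew : ∀ a b, r b a = -TensorProduct.comm k A A (r a b))
    (leibniz : ∀ a b c, r a (b * c) = (b ⊗ₜ[k] 1) * r a c + r a b * (1 ⊗ₜ[k] c)) (a b c : A) :
    r (a * b) c = (a ⊗ₜ[k] 1) * r b c + r a c * (1 ⊗ₜ[k] b) := by
  have skew_algEquiv (x y : A) : r y x = -Algebra.TensorProduct.comm k A A (r x y) := skew x y
  calc r (a * b) c
      = -Algebra.TensorProduct.comm k A A ((b ⊗ₜ[k] 1) * r c a + r c b * (1 ⊗ₜ[k] a)) := by
        rw [skew_algEquiv, mul_comm a b, leibniz]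
    _ = (1 ⊗ₜ[k] b) * -Algebra.TensorProduct.comm k A A (r c a)
          + -Algebra.TensorProduct.comm k A A (r c b) * (a ⊗ₜ[k] 1) := by
        simp only [map_add, map_mul, Algebra.TensorProduct.comm_tmul, neg_add, mul_neg, neg_mul]
    _ = (a ⊗ₜ[k] 1) * r b c + r a c * (1 ⊗ₜ[k] b) := by
        rw [← skew_algEquiv, ← skew_algEquiv]
        ring

theorem stmt_10_general
    (skew : ∀ a b, r b a = -TensorProduct.comm k A A (r a b))
    (leibniz : ∀ a b c, r a (b * c) = (b ⊗ₜ[k] 1) * r a c + r a b * (1 ⊗ₜ[k] c)) (a b c : A) :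
    (a ⊗ₜ[k] 1 - 1 ⊗ₜ[k] a) * r b c = (c ⊗ₜ[k] 1 - 1 ⊗ₜ[k] c) * r b a ∧
      (c ⊗ₜ[k] 1 - 1 ⊗ₜ[k] c) * r b a = (b ⊗ₜ[k] 1 - 1 ⊗ₜ[k] b) * r c a ∧
      (b ⊗ₜ[k] 1 - 1 ⊗ₜ[k] b) * r c a = (a ⊗ₜ[k] 1 - 1 ⊗ₜ[k] a) * r c b := by
  have exchange_right (x y z : A) :
      (y ⊗ₜ[k] 1 - 1 ⊗ₜ[k] y) * r x z = (z ⊗ₜ[k] 1 - 1 ⊗ₜ[k] z) * r x y :=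
    sub_mul_eq_sub_mul_of_leibniz (leibniz x) y z
  have exchange_left (x y z : A) :
      (x ⊗ₜ[k] 1 - 1 ⊗ₜ[k] x) * r y z = (y ⊗ₜ[k] 1 - 1 ⊗ₜ[k] y) * r x z :=
    sub_mul_eq_sub_mul_of_leibniz (D := fun w ↦ r w z)
      (fun v w ↦ leibniz_left_of_skew skew leibniz v w z) x y
  exact ⟨exchange_right b a c, exchange_left c b a, exchange_right c b a⟩

end SkewBracket

theorem stmt_10 (k : Type*) [Field k] (A : Type*) [CommRing A] [Algebra k A]
    (r : A ⊗[k] A →ₗ[k] A ⊗[k] A)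
    (hskew : ∀ a b : A, r (b ⊗ₜ[k] a) = - (TensorProduct.comm k A A) (r (a ⊗ₜ[k] b)))
    (hleib : ∀ a b c : A,
      r (a ⊗ₜ[k] (b * c)) = (b ⊗ₜ[k] (1 : A)) * r (a ⊗ₜ[k] c) + r (a ⊗ₜ[k] b) * ((1 : A) ⊗ₜ[k] c)) :
    ∀ a b c : A,
      (a ⊗ₜ[k] (1 : A) - (1 : A) ⊗ₜ[k] a) * r (b ⊗ₜ[k] c)
          = (c ⊗ₜ[k] (1 : A) - (1 : A) ⊗ₜ[k] c) * r (b ⊗ₜ[k] a) ∧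
        (c ⊗ₜ[k] (1 : A) - (1 : A) ⊗ₜ[k] c) * r (b ⊗ₜ[k] a)
          = (b ⊗ₜ[k] (1 : A) - (1 : A) ⊗ₜ[k] b) * r (c ⊗ₜ[k] a) ∧
        (b ⊗ₜ[k] (1 : A) - (1 : A) ⊗ₜ[k] b) * r (c ⊗ₜ[k] a)
          = (a ⊗ₜ[k] (1 : A) - (1 : A) ⊗ₜ[k] a) * r (c ⊗ₜ[k] b) := by
  exact stmt_10_general (r := fun a b ↦ r (a ⊗ₜ[k] b)) hskew hleib
end

section
/- Let k be a field, A a commutative associative unital k-algebra, and r : A ⊗ A → A ⊗ A a k-linear map which is skew (r(b⊗a) = −τ(r(a⊗b)) for all a,b, where τ is the flip of A ⊗ A) and satisfies the Leibniz rule r(a ⊗ bc) = (b⊗1)·r(a⊗c) + r(a⊗b)·(1⊗c) for all a,b,c ∈ A. Then for all a₁, a₂, b, c ∈ A: (a₁⊗1 − 1⊗a₁)·(a₂⊗1 − 1⊗a₂)·r(b⊗c) = (b⊗1 − 1⊗b)·(c⊗1 − 1⊗c)·r(a₁⊗a₂), where · denotes multiplication in the commutative algebra A ⊗ A. -/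
/- STATEMENT 11: For `A` commutative and `r : A ⊗ A → A ⊗ A` skew and satisfying the Leibniz
rule, for all `a₁,a₂,b,c`:
`(a₁⊗1 − 1⊗a₁)·(a₂⊗1 − 1⊗a₂)·r(b⊗c) = (b⊗1 − 1⊗b)·(c⊗1 − 1⊗c)·r(a₁⊗a₂)`. -/

open TensorProduct

/-!
Put `d a = a ⊗ 1 - 1 ⊗ a`. Expanding `r (a ⊗ bc) = r (a ⊗ cb)` by the Leibniz rule in both ways
gives `d b * r (a ⊗ c) = d c * r (a ⊗ b)`. Skewness carries the Leibniz rule over to the first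
argument of `r`, where the same exchange is therefore possible, and
`d a₁ * d a₂ * r (b ⊗ c) = d a₁ * d c * r (b ⊗ a₂) = d b * d c * r (a₁ ⊗ a₂)`.
-/

/-- `δ` is an `(f, g)`-twisted derivation, i.e. it satisfies the Leibniz rule with left factors
acting through `f` and right factors through `g`. Neither additivity of `δ` nor any compatibility
of `f` and `g` with the structure of `A` is part of the notion. -/
def IsTwistedDerivation {A R M : Type*} [Mul A] [Add M] [SMul R M] (f g : A → R) (δ : A → M) :
    Prop :=
  ∀ a b, δ (a * b) = f a • δ b + g b • δ a

namespace IsTwistedDerivation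

theorem sub_smul_comm {A R M : Type*} [CommMagma A] [Ring R] [AddCommGroup M] [Module R M]
    {f g : A → R} {δ : A → M} (hδ : IsTwistedDerivation f g δ) (a b : A) :
    (f a - g a) • δ b = (f b - g b) • δ a := by
  have expand : f a • δ b + g b • δ a = f b • δ a + g a • δ b := by
    rw [← hδ a b, ← hδ b a, mul_comm]
  rw [sub_smul, sub_smul, sub_eq_sub_iff_add_eq_add, expand]

theorem sub_smul_sub_smul_comm {A R M : Type*} [CommMagma A] [CommRing R] [AddCommGroup M]
    [Module R M] {f g : A → R} {D : A → A → M} (hleft : ∀ b, IsTwistedDerivation f g (D · b))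
    (hright : ∀ a, IsTwistedDerivation f g (D a)) (a₁ a₂ b c : A) :
    (f a₁ - g a₁) • (f a₂ - g a₂) • D b c = (f b - g b) • (f c - g c) • D a₁ a₂ :=
  calc
    (f a₁ - g a₁) • (f a₂ - g a₂) • D b c
      = (f a₁ - g a₁) • (f c - g c) • D b a₂ := by rw [(hright b).sub_smul_comm]
    _ = (f c - g c) • (f a₁ - g a₁) • D b a₂ := smul_comm _ _ _
    _ = (f c - g c) • (f b - g b) • D a₁ a₂ := by rw [(hleft a₂).sub_smul_comm]
    _ = (f b - g b) • (f c - g c) • D a₁ a₂ := smul_comm _ _ _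

theorem left_of_right_of_skew {A R : Type*} [CommMagma A] [Ring R] {f g : A → R} {σ : R →+* R}
    (hf : ∀ a, σ (f a) = g a) (hg : ∀ a, σ (g a) = f a) {D : A → A → R}
    (hskew : ∀ a b, D b a = -σ (D a b)) (hright : ∀ a, IsTwistedDerivation f g (D a)) (c : A) :
    IsTwistedDerivation f g (D · c) := fun a b ↦
  calc
    D (a * b) c = -σ (D c (b * a)) := by rw [hskew c, mul_comm]
    _ = -(g b * σ (D c a) + f a * σ (D c b)) := by
      rw [hright c b a, map_add, smul_eq_mul, smul_eq_mul, map_mul, map_mul, hf, hg]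
    _ = f a • D b c + g b • D a c := by
      rw [hskew c a, hskew c b, smul_eq_mul, smul_eq_mul, mul_neg, mul_neg, neg_add, add_comm]

end IsTwistedDerivation

theorem stmt_11_general {k A : Type*} [CommSemiring k] [CommRing A] [Algebra k A]
    (r : A → A → A ⊗[k] A)
    (hskew : ∀ a b, r b a = -TensorProduct.comm k A A (r a b))
    (hleib : ∀ a b c, r a (b * c) = (b ⊗ₜ[k] 1) * r a c + r a b * (1 ⊗ₜ[k] c))
    (a₁ a₂ b c : A) :
    (a₁ ⊗ₜ[k] 1 - 1 ⊗ₜ[k] a₁) * ((a₂ ⊗ₜ[k] 1 - 1 ⊗ₜ[k] a₂) * r b c)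
      = (b ⊗ₜ[k] 1 - 1 ⊗ₜ[k] b) * ((c ⊗ₜ[k] 1 - 1 ⊗ₜ[k] c) * r a₁ a₂) := by
  have hright (a : A) : IsTwistedDerivation (· ⊗ₜ[k] (1 : A)) ((1 : A) ⊗ₜ[k] ·) (r a) := by
    intro b c
    rw [hleib, smul_eq_mul, smul_eq_mul, mul_comm (r a b)]
  have hleft : ∀ c, IsTwistedDerivation (· ⊗ₜ[k] (1 : A)) ((1 : A) ⊗ₜ[k] ·) (r · c) :=
    IsTwistedDerivation.left_of_right_of_skew (σ := (Algebra.TensorProduct.comm k A A : _ →+* _))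
      (fun a ↦ TensorProduct.comm_tmul k A A a 1) (fun a ↦ TensorProduct.comm_tmul k A A 1 a)
      hskew hright
  exact IsTwistedDerivation.sub_smul_sub_smul_comm hleft hright a₁ a₂ b c

theorem stmt_11 (k : Type*) [Field k] (A : Type*) [CommRing A] [Algebra k A]
    (r : A ⊗[k] A →ₗ[k] A ⊗[k] A)
    (hskew : ∀ a b : A, r (b ⊗ₜ[k] a) = - (TensorProduct.comm k A A) (r (a ⊗ₜ[k] b)))
    (hleib : ∀ a b c : A,
      r (a ⊗ₜ[k] (b * c)) = (b ⊗ₜ[k] (1 : A)) * r (a ⊗ₜ[k] c) + r (a ⊗ₜ[k] b) * ((1 : A) ⊗ₜ[k] c)) :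
    ∀ a₁ a₂ b c : A,
      (a₁ ⊗ₜ[k] (1 : A) - (1 : A) ⊗ₜ[k] a₁) * ((a₂ ⊗ₜ[k] (1 : A) - (1 : A) ⊗ₜ[k] a₂)
          * r (b ⊗ₜ[k] c))
        = (b ⊗ₜ[k] (1 : A) - (1 : A) ⊗ₜ[k] b) * ((c ⊗ₜ[k] (1 : A) - (1 : A) ⊗ₜ[k] c)
          * r (a₁ ⊗ₜ[k] a₂)) :=
  stmt_11_general (fun a b ↦ r (a ⊗ₜ b)) hskew hleib
end

section
/- Let k be a field of characteristic zero, V a finite-dimensional k-vector space, and m ≥ 1. An endomorphism of V^{⊗m} commutes with the permutation action of S_m (permuting tensor factors) if and only if it lies in the k-linear span of the operators {g^{⊗m} : g ∈ GL(V)}. In other words, End_{S_m}(V^{⊗m}) = span_k{g^{⊗m} : g ∈ GL(V)} (classical Schur–Weyl duality). -/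
/- STATEMENT 18 (classical Schur–Weyl duality): for `V` finite-dimensional over a field of
characteristic zero, an endomorphism of `V^{⊗m}` commutes with the permutation action of
`S_m` iff it lies in the span of the operators `g^{⊗m}`, `g ∈ GL(V)`. -/

open TensorProduct PiTensorProduct

noncomputable section

variable (k : Type*) [Field k] (V : Type*) [AddCommGroup V] [Module k V]

/-- The permutation action of `σ ∈ S_m` on `V^{⊗m}`, sending
`v₁ ⊗ ⋯ ⊗ v_m` to `v_{σ⁻¹(1)} ⊗ ⋯ ⊗ v_{σ⁻¹(m)}`. -/
def permOp (m : ℕ) (σ : Equiv.Perm (Fin m)) : Module.End k (⨂[k]^m V) :=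
  (PiTensorProduct.reindex k (fun _ : Fin m => V) σ).toLinearMap

/-- The diagonal action `g^{⊗m}` of an invertible endomorphism `g` on `V^{⊗m}`. -/
def diagPow (m : ℕ) (g : V ≃ₗ[k] V) : Module.End k (⨂[k]^m V) :=
  PiTensorProduct.map (fun _ : Fin m => g.toLinearMap)

/-!
Let `e` be the matrix-unit basis of `End V`, and expand an operator on `V^{⊗m}` as
`f = ∑ r, c r • (e (r 1) ⊗ ⋯ ⊗ e (r m))`, summed over the words `r` of length `m` in the matrix
units. If `f` commutes with `S_m`, then `c r` depends only on the multiset of letters of `r`, i.e.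
on the monomial `t^r = t (r 1) ⋯ t (r m)`; so `c r = L (t^r)` for some linear functional `L` on
polynomials. On the other hand the generic operator `A t = ∑ j, t j • e j` satisfies
`(A t)^{⊗m} = ∑ r, t^r • (e (r 1) ⊗ ⋯ ⊗ e (r m))`. A functional killing `(A t)^{⊗m}` whenever
`det (A t) ≠ 0` turns the right-hand side into a polynomial in `t` whose product with `det (A t)`
vanishes identically. Over an infinite field that polynomial is zero, and applying `L` to it shows
that the functional kills `f`. In contrast with the averaging argument, nothing is divided by `m!`.
-/

section Polynomials

variable {K W α κ : Type*} [Field K] [Infinite K] [AddCommGroup W] [Module K W] [Fintype α]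

theorem sum_map_smul_mem_of_sum_eval_smul_mem {p : Submodule K W} {d : MvPolynomial κ K}
    (hd : d ≠ 0) {q : α → MvPolynomial κ K} {x : α → W}
    (h : ∀ t, MvPolynomial.eval t d ≠ 0 → ∑ a, MvPolynomial.eval t (q a) • x a ∈ p)
    (L : MvPolynomial κ K →ₗ[K] K) :
    ∑ a, L (q a) • x a ∈ p := by
  by_contra hx
  obtain ⟨φ, hφ, hp⟩ := Submodule.exists_le_ker_of_notMem hx
  let Q : MvPolynomial κ K := ∑ a, φ (x a) • q a
  have eval_Q (t : κ → K) : MvPolynomial.eval t Q = φ (∑ a, MvPolynomial.eval t (q a) • x a) := by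
    simp [Q, MvPolynomial.smul_eval, mul_comm]
  have d_mul_Q : d * Q = 0 := MvPolynomial.funext fun t => by
    rw [map_mul, map_zero, mul_eq_zero, or_iff_not_imp_left]
    exact fun ht => (eval_Q t).trans (hp (h t ht))
  have Q_eq_zero : Q = 0 := (mul_eq_zero.mp d_mul_Q).resolve_left hd
  refine hφ ?_
  calc φ (∑ a, L (q a) • x a) = L Q := by simp [Q, mul_comm]
    _ = 0 := by rw [Q_eq_zero, map_zero]

end Polynomials

section Words

variable {ι κ : Type*} [Fintype ι]

/-- The content of a word `r : ι → κ`: the multiplicities of its letters, encoded as the exponent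
vector of the monomial `∏ i, X (r i)`. -/
def wordContent (r : ι → κ) : κ →₀ ℕ :=
  ∑ i, Finsupp.single (r i) 1

theorem wordContent_apply (r : ι → κ) (j : κ) : wordContent r j = Nat.card {i // r i = j} := by
  classical
  simp [wordContent, Finsupp.finsetSum_apply, Finsupp.single_apply, Fintype.card_subtype]

theorem exists_comp_perm_eq_of_wordContent_eq {r s : ι → κ} (h : wordContent r = wordContent s) :
    ∃ σ : Equiv.Perm ι, s ∘ σ = r := by
  have card_fiber (j : κ) : Nat.card {i // r i = j} = Nat.card {i // s i = j} := by
    rw [← wordContent_apply, ← wordContent_apply, h]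
  exact ⟨Equiv.ofFiberEquiv fun j => (Finite.card_eq.mp (card_fiber j)).some,
    funext (Equiv.ofFiberEquiv_map _)⟩

theorem factorsThrough_wordContent {β : Type*} {c : (ι → κ) → β}
    (hc : ∀ (σ : Equiv.Perm ι) r, c (r ∘ σ) = c r) : c.FactorsThrough wordContent := fun r s h => by
  obtain ⟨σ, rfl⟩ := exists_comp_perm_eq_of_wordContent_eq h
  exact hc σ s

theorem eval_monomial_wordContent {R : Type*} [CommSemiring R] (t : κ → R) (r : ι → κ) :
    MvPolynomial.eval t (MvPolynomial.monomial (wordContent r) 1) = ∏ i, t (r i) := by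
  simp [wordContent, MvPolynomial.monomial_sum_index, MvPolynomial.eval_monomial]

end Words

section Polarization

variable {ι κ : Type*} [Fintype ι] [DecidableEq ι] [Fintype κ]

theorem multilinearMap_const_sum_smul {R E F : Type*} [CommSemiring R] [AddCommMonoid E]
    [Module R E] [AddCommMonoid F] [Module R F] (Φ : MultilinearMap R (fun _ : ι => E) F)
    (u : κ → E) (t : κ → R) :
    Φ (fun _ => ∑ j, t j • u j) = ∑ r : ι → κ, (∏ i, t (r i)) • Φ (u ∘ r) := by
  rw [MultilinearMap.map_sum]
  exact Finset.sum_congr rfl fun r _ => Φ.map_smul_univ _ _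

theorem sum_smul_mem_of_multilinearMap_const_mem {K E F : Type*} [Field K] [Infinite K]
    [AddCommGroup E] [Module K E] [AddCommGroup F] [Module K F]
    (Φ : MultilinearMap K (fun _ : ι => E) F) {u : κ → E} {p : Submodule K F}
    {d : MvPolynomial κ K} (hd : d ≠ 0)
    (h : ∀ t, MvPolynomial.eval t d ≠ 0 → Φ (fun _ => ∑ j, t j • u j) ∈ p)
    {c : (ι → κ) → K} (hc : ∀ (σ : Equiv.Perm ι) r, c (r ∘ σ) = c r) :
    ∑ r, c r • Φ (u ∘ r) ∈ p := by
  obtain ⟨C, rfl⟩ := (Function.factorsThrough_iff c).mp (factorsThrough_wordContent hc)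
  let L : MvPolynomial κ K →ₗ[K] K := (MvPolynomial.basisMonomials κ K).constr K C
  have L_monomial (μ : κ →₀ ℕ) : L (MvPolynomial.monomial μ 1) = C μ := by
    simpa only [MvPolynomial.coe_basisMonomials] using
      (MvPolynomial.basisMonomials κ K).constr_basis K C μ
  simp only [Function.comp_apply (f := C), ← L_monomial]
  refine sum_map_smul_mem_of_sum_eval_smul_mem hd (fun t ht => ?_) L
  simpa only [eval_monomial_wordContent, ← multilinearMap_const_sum_smul] using h t ht

end Polarization

section TensorPowerBasis

variable {R M I : Type*} [CommSemiring R] [AddCommMonoid M] [Module R M] (b : Module.Basis I R M)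

/-- The basis of `M^{⊗ι}` consisting of the pure tensors of vectors of the basis `b` of `M`. -/
abbrev tensorPowerBasis (ι : Type*) [Finite ι] : Module.Basis (ι → I) R (⨂[R] _ : ι, M) :=
  Basis.piTensorProduct fun _ => b

variable {ι : Type*} [Finite ι]

theorem reindex_tensorPowerBasis (σ : Equiv.Perm ι) (p : ι → I) :
    reindex R (fun _ => M) σ (tensorPowerBasis b ι (p ∘ σ)) = tensorPowerBasis b ι p := by
  simp only [Basis.piTensorProduct_apply]
  rw [reindex_tprod]
  simp only [Function.comp_apply, Equiv.apply_symm_apply]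

theorem tensorPowerBasis_repr_reindex (σ : Equiv.Perm ι) (x : ⨂[R] _ : ι, M) (p : ι → I) :
    (tensorPowerBasis b ι).repr (reindex R (fun _ => M) σ x) p =
      (tensorPowerBasis b ι).repr x (p ∘ σ) := by
  have := Fintype.ofFinite ι
  induction x using PiTensorProduct.induction_on with
  | smul_tprod a v =>
    have prod_repr : ∏ i, b.repr (v (σ.symm i)) (p i) = ∏ i, b.repr (v i) (p (σ i)) :=
      Fintype.prod_equiv σ.symm _ _ fun i => by rw [σ.apply_symm_apply]
    rw [map_smul, reindex_tprod]
    simp [prod_repr]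
  | add x y hx hy => simp [hx, hy]

end TensorPowerBasis

section MatrixUnits

variable {R M ι I : Type*} [CommSemiring R] [AddCommMonoid M] [Module R M] [Fintype I]
  [DecidableEq I] (b : Module.Basis I R M)

theorem toLin_eq_sum_smul_end (A : Matrix I I R) :
    Matrix.toLin b b A = ∑ ij : I × I, A ij.1 ij.2 • b.end ij := by
  conv_lhs => rw [A.matrix_eq_sum_single]
  simp [Fintype.sum_prod_type, Module.Basis.end_apply, Matrix.stdBasis_eq_single, ← map_smul]

variable [Fintype ι] [DecidableEq ι]

theorem toMatrix_tensorPowerBasis_comp_perm {f : Module.End R (⨂[R] _ : ι, M)}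
    {σ : Equiv.Perm ι} (hf : Commute f (reindex R (fun _ => M) σ).toLinearMap) (p q : ι → I) :
    LinearMap.toMatrix (tensorPowerBasis b ι) (tensorPowerBasis b ι) f (p ∘ σ) (q ∘ σ) =
      LinearMap.toMatrix (tensorPowerBasis b ι) (tensorPowerBasis b ι) f p q := by
  simp only [LinearMap.toMatrix_apply]
  rw [← tensorPowerBasis_repr_reindex, ← reindex_tensorPowerBasis b σ q]
  exact DFunLike.congr_fun
    (congrArg (tensorPowerBasis b ι).repr (LinearMap.congr_fun hf.eq.symm _)) p

theorem tensorPowerBasis_end_apply (r : ι → I × I) :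
    (tensorPowerBasis b ι).end (Prod.fst ∘ r, Prod.snd ∘ r) =
      PiTensorProduct.map fun i => b.end (r i) := by
  refine (tensorPowerBasis b ι).ext fun p => ?_
  rw [Module.Basis.end_apply_apply]
  simp only [Basis.piTensorProduct_apply, map_tprod, Module.Basis.end_apply_apply]
  split_ifs with h
  · simp [← h]
  · obtain ⟨i, hi⟩ := Function.ne_iff.mp h
    exact ((PiTensorProduct.tprod R).map_coord_zero i (if_neg hi)).symm

theorem eq_sum_toMatrix_smul_map_end (f : Module.End R (⨂[R] _ : ι, M)) :
    f = ∑ r : ι → I × I,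
      LinearMap.toMatrix (tensorPowerBasis b ι) (tensorPowerBasis b ι) f
        (Prod.fst ∘ r) (Prod.snd ∘ r) • PiTensorProduct.map fun i => b.end (r i) := by
  conv_lhs => rw [← Matrix.toLin_toMatrix (tensorPowerBasis b ι) (tensorPowerBasis b ι) f,
    toLin_eq_sum_smul_end]
  simp only [← tensorPowerBasis_end_apply]
  exact ((Equiv.arrowProdEquivProdArrow ι (fun _ => I) fun _ => I).sum_comp _).symm

end MatrixUnits

theorem exists_linearEquiv_eq_sum_smul_end {R M I : Type*} [CommRing R] [AddCommGroup M]
    [Module R M] [Fintype I] [DecidableEq I] (b : Module.Basis I R M) {t : I × I → R}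
    (ht : IsUnit (MvPolynomial.eval t (Matrix.mvPolynomialX I I R).det)) :
    ∃ g : M ≃ₗ[R] M, g.toLinearMap = ∑ ij, t ij • b.end ij := by
  let A : Matrix I I R := Matrix.of fun i j => t (i, j)
  have eval_det : MvPolynomial.eval t (Matrix.mvPolynomialX I I R).det = A.det := by
    rw [RingHom.map_det, ← Matrix.mvPolynomialX_mapMatrix_eval A]
    rfl
  exact ⟨A.toLinearEquiv b (eval_det ▸ ht), toLin_eq_sum_smul_end b A⟩

section Commutant

variable {k V}

theorem mem_span_map_linearEquiv_of_commute_reindex {ι : Type*} [Finite ι] [Infinite k]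
    [FiniteDimensional k V] {f : Module.End k (⨂[k] _ : ι, V)}
    (hf : ∀ σ : Equiv.Perm ι, Commute f (reindex k (fun _ => V) σ).toLinearMap) :
    f ∈ Submodule.span k
      (Set.range fun g : V ≃ₗ[k] V => PiTensorProduct.map fun _ : ι => g.toLinearMap) := by
  classical
  have := Fintype.ofFinite ι
  let b := Module.finBasis k V
  rw [eq_sum_toMatrix_smul_map_end b f]
  refine sum_smul_mem_of_multilinearMap_const_mem (mapMultilinear k (fun _ => V) fun _ => V)
    (Matrix.det_mvPolynomialX_ne_zero _ k) (fun t ht => Submodule.subset_span ?_)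
    fun σ r => toMatrix_tensorPowerBasis_comp_perm b (hf σ) (Prod.fst ∘ r) (Prod.snd ∘ r)
  obtain ⟨g, hg⟩ := exists_linearEquiv_eq_sum_smul_end b ht.isUnit
  rw [← hg]
  exact ⟨g, rfl⟩

theorem commute_permOp_of_mem_span_diagPow {m : ℕ} {f : Module.End k (⨂[k]^m V)}
    (hf : f ∈ Submodule.span k {h | ∃ g : V ≃ₗ[k] V, h = diagPow k V m g})
    (σ : Equiv.Perm (Fin m)) : Commute f (permOp k V m σ) := by
  induction hf using Submodule.span_induction with
  | mem _ h =>
    obtain ⟨g, rfl⟩ := h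
    exact map_comp_reindex_eq (fun _ => g.toLinearMap) σ
  | zero => exact Commute.zero_left _
  | add _ _ _ _ hx hy => exact hx.add_left hy
  | smul a _ _ hx => exact hx.smul_left a

end Commutant

theorem stmt_18_general (k : Type*) [Field k] [Infinite k]
    (V : Type*) [AddCommGroup V] [Module k V] [FiniteDimensional k V]
    (m : ℕ) (f : Module.End k (⨂[k]^m V)) :
    (∀ σ : Equiv.Perm (Fin m), f * permOp k V m σ = permOp k V m σ * f) ↔
      f ∈ Submodule.span k
        {h : Module.End k (⨂[k]^m V) | ∃ g : V ≃ₗ[k] V, h = diagPow k V m g} := by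
  refine ⟨fun hf => ?_, commute_permOp_of_mem_span_diagPow⟩
  refine Submodule.span_mono ?_ (mem_span_map_linearEquiv_of_commute_reindex hf)
  rintro _ ⟨g, rfl⟩
  exact ⟨g, rfl⟩

theorem stmt_18 (k : Type*) [Field k] [CharZero k]
    (V : Type*) [AddCommGroup V] [Module k V] [FiniteDimensional k V]
    (m : ℕ) (hm : 1 ≤ m) (f : Module.End k (⨂[k]^m V)) :
    (∀ σ : Equiv.Perm (Fin m), f * permOp k V m σ = permOp k V m σ * f) ↔
      f ∈ Submodule.span k
        {h : Module.End k (⨂[k]^m V) | ∃ g : V ≃ₗ[k] V, h = diagPow k V m g} := by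
  have := CharZero.infinite k
  exact stmt_18_general k V m f

end
end
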